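/- arXiv:2010.12103 — 3 statements merged into one kernel-verified Lean document; each statement's English description precedes it below -/
import Mathlib

section
/- Assume c = b − a ≤ 1. Define g : X^m → ℝ by g(S) = m·SD⁻(F,S) = sup_{f∈F} { m E_μ[f] − Σ_{i=1}^m f(s_i) }, and for each i define g_i(S) = inf_{s'_i ∈ X} sup_{f∈F} { m E_μ[f] − Σ_{j≠i} f(s_j) − f(s'_i) }. Then for every S ∈ X^m and every i: 0 ≤ g(S) − g_i(S) ≤ 1, and Σ_{i=1}^m ( g(S) − g_i(S) ) ≤ g(S) + m γ_F. That is, g is a (1, m γ_F)-self-bounding function. -/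
/-!
Write `v_l(S) = m E[f_l] - ∑ k, f_l(s_k)`, so that `g(S) = sup_l v_l(S)`. Replacing `s_i` by `s'`
changes `v_l` by exactly `f_l(s_i) - f_l(s')`, and `f_l(s') ≤ b`; hence
`v_l(S) + f_l(s_i) - b ≤ g_i(S)` for every `l` (`le_gSDmi`). Since `f_l(s_i) ≥ a` and `b - a ≤ 1`,
taking the supremum over `l` gives `g(S) - g_i(S) ≤ 1`. Summing the same inequality over `i` gives
`∑ i, (g(S) - g_i(S)) ≤ m (g(S) - v_l(S)) + m b - ∑ i, f_l(s_i)`, and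
`m b - ∑ i, f_l(s_i) = v_l(S) + m (b - E[f_l]) ≤ g(S) + m γ_F`. The remaining term
`m (g(S) - v_l(S))` is removed by taking the supremum over `l`.
-/

open MeasureTheory

noncomputable section

/-- Map a Boolean to a `±1` sign: `true ↦ 1`, `false ↦ -1`. -/
def sgnB (x : Bool) : ℝ := if x then 1 else -1

/-- The `n`-Monte-Carlo Empirical Rademacher Average
`R̂ⁿ_m(F,S,σ) = (1/n) Σ_j sup_{f∈F} (1/m) Σ_i σ_{j,i} f(s_i)`. -/
def mcera {X ι : Type*} (f : ι → X → ℝ) (n m : ℕ) (S : Fin m → X)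
    (σ : Fin n → Fin m → Bool) : ℝ :=
  (n : ℝ)⁻¹ * ∑ j : Fin n, ⨆ l : ι, (m : ℝ)⁻¹ * ∑ k : Fin m, sgnB (σ j k) * f l (S k)

/-- Uniform measure on `n × m` sign matrices: the entries are independent
uniform Rademacher (±1) random variables. -/
def radMeasure (n m : ℕ) : Measure (Fin n → Fin m → Bool) :=
  (PMF.uniformOfFintype (Fin n → Fin m → Bool)).toMeasure

/-- The Empirical Rademacher Average `R̂(F,S) = E_σ[R̂ⁿ_m(F,S,σ)]`. -/
def era {X ι : Type*} (f : ι → X → ℝ) (n m : ℕ) (S : Fin m → X) : ℝ :=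
  ∫ σ, mcera f n m S σ ∂(radMeasure n m)

/-- The Rademacher Complexity `R(F,m) = E_S[R̂(F,S)]`, `S` being `m` i.i.d. samples. -/
def rc {X ι : Type*} [MeasurableSpace X] (f : ι → X → ℝ) (n m : ℕ) (μ : Measure X) : ℝ :=
  ∫ S : Fin m → X, era f n m S ∂(Measure.pi fun _ : Fin m => μ)

/-- `ẑ(S) = sup_{f∈F, 1≤i≤m} |f(s_i)|`. -/
def zhat {X ι : Type*} (f : ι → X → ℝ) {m : ℕ} (S : Fin m → X) : ℝ :=
  ⨆ p : ι × Fin m, |f p.1 (S p.2)|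

/-- `ν̂_F(S) = (1/m) sup_{f∈F} Σ_i |f(s_i)|`. -/
def nuhat {X ι : Type*} (f : ι → X → ℝ) {m : ℕ} (S : Fin m → X) : ℝ :=
  (m : ℝ)⁻¹ * ⨆ l : ι, ∑ k : Fin m, |f l (S k)|

/-- The empirical wimpy variance `σ̂²_F(S) = (1/m) sup_{f∈F} Σ_i f(s_i)²`. -/
def sigma2hat {X ι : Type*} (f : ι → X → ℝ) {m : ℕ} (S : Fin m → X) : ℝ :=
  (m : ℝ)⁻¹ * ⨆ l : ι, ∑ k : Fin m, (f l (S k)) ^ 2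

/-- The wimpy variance `σ²_F = sup_{f∈F} E_μ[f²]`. -/
def wimpyVar {X ι : Type*} [MeasurableSpace X] (f : ι → X → ℝ) (μ : Measure X) : ℝ :=
  ⨆ l : ι, ∫ x, (f l x) ^ 2 ∂μ

/-- The positive supremum deviation `SD⁺(F,S) = sup_{f∈F} ((1/m)Σ_i f(s_i) - E_μ[f])`. -/
def sdPlus {X ι : Type*} [MeasurableSpace X] (f : ι → X → ℝ) (μ : Measure X)
    {m : ℕ} (S : Fin m → X) : ℝ :=
  ⨆ l : ι, ((m : ℝ)⁻¹ * ∑ k : Fin m, f l (S k) - ∫ x, f l x ∂μ)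

/-- The negative supremum deviation `SD⁻(F,S) = sup_{f∈F} (E_μ[f] - (1/m)Σ_i f(s_i))`. -/
def sdMinus {X ι : Type*} [MeasurableSpace X] (f : ι → X → ℝ) (μ : Measure X)
    {m : ℕ} (S : Fin m → X) : ℝ :=
  ⨆ l : ι, ((∫ x, f l x ∂μ) - (m : ℝ)⁻¹ * ∑ k : Fin m, f l (S k))

/-- `η_F = sup_{f∈F} E_μ[f] - a`. -/
def etaF {X ι : Type*} [MeasurableSpace X] (f : ι → X → ℝ) (μ : Measure X) (a : ℝ) : ℝ :=
  (⨆ l : ι, ∫ x, f l x ∂μ) - a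

/-- `γ_F = b - inf_{f∈F} E_μ[f]`. -/
def gammaF {X ι : Type*} [MeasurableSpace X] (f : ι → X → ℝ) (μ : Measure X) (b : ℝ) : ℝ :=
  b - ⨅ l : ι, ∫ x, f l x ∂μ

/-- `η̂_F(S) = sup_{f∈F} (1/m) Σ_i f(s_i) - a`. -/
def etahat {X ι : Type*} (f : ι → X → ℝ) {m : ℕ} (S : Fin m → X) (a : ℝ) : ℝ :=
  (⨆ l : ι, (m : ℝ)⁻¹ * ∑ k : Fin m, f l (S k)) - a

/-- `γ̂_F(S) = b - sup_{f∈F} (1/m) Σ_i f(s_i)`. -/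
def gammahat {X ι : Type*} (f : ι → X → ℝ) {m : ℕ} (S : Fin m → X) (b : ℝ) : ℝ :=
  b - ⨆ l : ι, (m : ℝ)⁻¹ * ∑ k : Fin m, f l (S k)

/-- `h(x) = (1+x) ln(1+x) - x`. -/
def hfun (x : ℝ) : ℝ := (1 + x) * Real.log (1 + x) - x

/-- `g(σ) = n m R̂ⁿ_m(F,S,σ) = Σ_j sup_{f∈F} Σ_i σ_{j,i} f(s_i)`. -/
def gup {X ι : Type*} (f : ι → X → ℝ) {n m : ℕ} (S : Fin m → X)
    (σ : Fin n → Fin m → Bool) : ℝ :=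
  ∑ j : Fin n, ⨆ l : ι, ∑ k : Fin m, sgnB (σ j k) * f l (S k)

/-- `g_{j,i}(σ)`: infimum over `σ'_{j,i} ∈ {-1,1}` of `g` evaluated at `σ` with its
`(j,i)` entry replaced by `σ'_{j,i}`. -/
def gji {X ι : Type*} (f : ι → X → ℝ) {n m : ℕ} (S : Fin m → X)
    (σ : Fin n → Fin m → Bool) (j : Fin n) (i : Fin m) : ℝ :=
  min (gup f S (Function.update σ j (Function.update (σ j) i true)))
      (gup f S (Function.update σ j (Function.update (σ j) i false)))

/-- `g(S) = m SD⁺(F,S) = sup_{f∈F} (Σ_i f(s_i) - m E_μ[f])`. -/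
def gSDp {X ι : Type*} [MeasurableSpace X] (f : ι → X → ℝ) (μ : Measure X)
    {m : ℕ} (S : Fin m → X) : ℝ :=
  ⨆ l : ι, (∑ k : Fin m, f l (S k) - m * ∫ x, f l x ∂μ)

/-- `g_i(S) = inf_{s'_i ∈ X} g(s_1,…,s_{i-1},s'_i,s_{i+1},…,s_m)` for `g = m SD⁺`. -/
def gSDpi {X ι : Type*} [MeasurableSpace X] (f : ι → X → ℝ) (μ : Measure X)
    {m : ℕ} (S : Fin m → X) (i : Fin m) : ℝ :=
  ⨅ s' : X, gSDp f μ (Function.update S i s')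

/-- `g(S) = m SD⁻(F,S) = sup_{f∈F} (m E_μ[f] - Σ_i f(s_i))`. -/
def gSDm {X ι : Type*} [MeasurableSpace X] (f : ι → X → ℝ) (μ : Measure X)
    {m : ℕ} (S : Fin m → X) : ℝ :=
  ⨆ l : ι, ((m : ℝ) * (∫ x, f l x ∂μ) - ∑ k : Fin m, f l (S k))

/-- `g_i(S) = inf_{s'_i ∈ X} g(s_1,…,s_{i-1},s'_i,s_{i+1},…,s_m)` for `g = m SD⁻`. -/
def gSDmi {X ι : Type*} [MeasurableSpace X] (f : ι → X → ℝ) (μ : Measure X)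
    {m : ℕ} (S : Fin m → X) (i : Fin m) : ℝ :=
  ⨅ s' : X, gSDm f μ (Function.update S i s')

/-- `g(S) = m σ̂²_F(S) = sup_{f∈F} Σ_i f(s_i)²`. -/
def gWv {X ι : Type*} (f : ι → X → ℝ) {m : ℕ} (S : Fin m → X) : ℝ :=
  ⨆ l : ι, ∑ k : Fin m, (f l (S k)) ^ 2

/-- `g_j(S) = sup_{f∈F} Σ_{i≠j} f(s_i)²`. -/
def gWvj {X ι : Type*} (f : ι → X → ℝ) {m : ℕ} (S : Fin m → X) (j : Fin m) : ℝ :=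
  ⨆ l : ι, ∑ k ∈ Finset.univ.erase j, (f l (S k)) ^ 2


lemma integral_mem_Icc_of_range {X : Type*} [MeasurableSpace X] {h : X → ℝ} {a b : ℝ}
    (hm : Measurable h) (hr : ∀ x, h x ∈ Set.Icc a b)
    (μ : Measure X) [IsProbabilityMeasure μ] : ∫ x, h x ∂μ ∈ Set.Icc a b := by
  have hi : Integrable h μ :=
    Integrable.of_mem_Icc a b hm.aemeasurable (Filter.Eventually.of_forall hr)
  constructor
  · simpa using integral_mono (integrable_const a) hi (fun x => (hr x).1)
  · simpa using integral_mono hi (integrable_const b) (fun x => (hr x).2)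

lemma bddAbove_gSDm {X : Type*} [MeasurableSpace X] {ι : Type*}
    {f : ι → X → ℝ} {a b : ℝ} (hmeas : ∀ l, Measurable (f l))
    (hrange : ∀ l x, f l x ∈ Set.Icc a b) (μ : Measure X) [IsProbabilityMeasure μ]
    {m : ℕ} (S : Fin m → X) :
    BddAbove (Set.range fun l : ι => (m : ℝ) * (∫ x, f l x ∂μ) - ∑ k : Fin m, f l (S k)) := by
  refine ⟨m * b - m * a, ?_⟩
  rintro _ ⟨l, rfl⟩
  have h1 := (integral_mem_Icc_of_range (hmeas l) (hrange l) μ).2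
  have h2 : (m : ℝ) * a ≤ ∑ k : Fin m, f l (S k) := by
    simpa using Finset.card_nsmul_le_sum Finset.univ (fun k => f l (S k)) a
      (fun k _ => (hrange l (S k)).1)
  have h3 := mul_le_mul_of_nonneg_left h1 (Nat.cast_nonneg (α := ℝ) m)
  simp only
  linarith

lemma sum_update_eq {X : Type*} (h : X → ℝ) {m : ℕ} (S : Fin m → X) (i : Fin m) (s' : X) :
    ∑ k : Fin m, h (Function.update S i s' k) = ∑ k : Fin m, h (S k) - h (S i) + h s' := by
  rw [← Finset.add_sum_erase _ _ (Finset.mem_univ i),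
    ← Finset.add_sum_erase _ (fun k => h (S k)) (Finset.mem_univ i)]
  have : ∑ k ∈ Finset.univ.erase i, h (Function.update S i s' k)
      = ∑ k ∈ Finset.univ.erase i, h (S k) :=
    Finset.sum_congr rfl fun k hk => by
      rw [Function.update_of_ne (Finset.ne_of_mem_erase hk)]
  rw [this, Function.update_self]
  ring

/-- Resampling the `i`-th coordinate lowers the objective of the `l`-th function by at most
`b - f_l(s_i)`. -/
lemma le_gSDm_update {X : Type*} [MeasurableSpace X] {ι : Type*}
    {f : ι → X → ℝ} {a b : ℝ} (hmeas : ∀ l, Measurable (f l))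
    (hrange : ∀ l x, f l x ∈ Set.Icc a b) (μ : Measure X) [IsProbabilityMeasure μ]
    {m : ℕ} (S : Fin m → X) (i : Fin m) (l : ι) (s' : X) :
    (m : ℝ) * (∫ x, f l x ∂μ) - ∑ k : Fin m, f l (S k) + f l (S i) - b
      ≤ gSDm f μ (Function.update S i s') := by
  have h := le_ciSup (bddAbove_gSDm hmeas hrange μ (Function.update S i s')) l
  simp only [sum_update_eq] at h
  have hb := (hrange l s').2
  rw [gSDm]
  simp only [sum_update_eq]
  linarith

lemma le_gSDmi {X : Type*} [MeasurableSpace X] {ι : Type*}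
    {f : ι → X → ℝ} {a b : ℝ} (hmeas : ∀ l, Measurable (f l))
    (hrange : ∀ l x, f l x ∈ Set.Icc a b) (μ : Measure X) [IsProbabilityMeasure μ]
    {m : ℕ} (S : Fin m → X) (i : Fin m) (l : ι) :
    (m : ℝ) * (∫ x, f l x ∂μ) - ∑ k : Fin m, f l (S k) + f l (S i) - b ≤ gSDmi f μ S i := by
  have : Nonempty X := ⟨S i⟩
  exact le_ciInf fun s' => le_gSDm_update hmeas hrange μ S i l s'

theorem stmt_14 {X : Type*} [MeasurableSpace X] {ι : Type*} [Countable ι]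
    (f : ι → X → ℝ) (a b : ℝ) (ha : a ≤ 0) (hb : 0 < b)
    (hmeas : ∀ l : ι, Measurable (f l))
    (hrange : ∀ (l : ι) (x : X), f l x ∈ Set.Icc a b)
    (hzero : ∃ l₀ : ι, ∀ x : X, f l₀ x = 0)
    (μ : Measure X) [IsProbabilityMeasure μ] (hc : b - a ≤ 1) (m : ℕ) :
    (∀ (S : Fin m → X) (i : Fin m),
        0 ≤ gSDm f μ S - gSDmi f μ S i ∧ gSDm f μ S - gSDmi f μ S i ≤ 1) ∧
    ∀ S : Fin m → X,
      ∑ i : Fin m, (gSDm f μ S - gSDmi f μ S i) ≤ gSDm f μ S + (m : ℝ) * gammaF f μ b := by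
  obtain ⟨l₀, -⟩ := hzero
  have : Nonempty ι := ⟨l₀⟩
  refine ⟨fun S i => ⟨?_, ?_⟩, fun S => ?_⟩
  · have hbdd : BddBelow (Set.range fun s' : X => gSDm f μ (Function.update S i s')) := by
      refine ⟨(m : ℝ) * (∫ x, f l₀ x ∂μ) - ∑ k : Fin m, f l₀ (S k) + f l₀ (S i) - b, ?_⟩
      rintro _ ⟨s', rfl⟩
      exact le_gSDm_update hmeas hrange μ S i l₀ s'
    -- The original point `S i` is one of the candidates in the infimum.
    have h := ciInf_le hbdd (S i)
    simp only [Function.update_eq_self] at h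
    exact sub_nonneg.mpr h
  · have h : gSDm f μ S ≤ gSDmi f μ S i + 1 := by
      refine ciSup_le fun l => ?_
      have h1 := le_gSDmi hmeas hrange μ S i l
      have h2 := (hrange l (S i)).1
      linarith
    linarith
  · have hl : ∀ l : ι, (m : ℝ) * ((m : ℝ) * (∫ x, f l x ∂μ) - ∑ k : Fin m, f l (S k))
        ≤ gSDm f μ S + (m : ℝ) * gammaF f μ b + ∑ i : Fin m, gSDmi f μ S i := by
      intro l
      have h1 := Finset.sum_le_sum fun (i : Fin m) (_ : i ∈ Finset.univ) =>
        le_gSDmi hmeas hrange μ S i l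
      simp only [Finset.sum_sub_distrib, Finset.sum_add_distrib, Finset.sum_const,
        Finset.card_univ, Fintype.card_fin, nsmul_eq_mul] at h1
      have h2 : (m : ℝ) * (∫ x, f l x ∂μ) - ∑ k : Fin m, f l (S k) ≤ gSDm f μ S :=
        le_ciSup (bddAbove_gSDm hmeas hrange μ S) l
      have h3 : (⨅ l : ι, ∫ x, f l x ∂μ) ≤ ∫ x, f l x ∂μ := by
        refine ciInf_le ⟨a, ?_⟩ l
        rintro _ ⟨l', rfl⟩
        exact (integral_mem_Icc_of_range (hmeas l') (hrange l') μ).1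
      have h4 := mul_le_mul_of_nonneg_left h3 (Nat.cast_nonneg (α := ℝ) m)
      rw [gammaF]
      linarith
    have hsup : (m : ℝ) * gSDm f μ S
        ≤ gSDm f μ S + (m : ℝ) * gammaF f μ b + ∑ i : Fin m, gSDmi f μ S i := by
      conv_lhs => rw [gSDm, Real.mul_iSup_of_nonneg (Nat.cast_nonneg m)]
      exact ciSup_le hl
    simp only [Finset.sum_sub_distrib, Finset.sum_const, Finset.card_univ, Fintype.card_fin,
      nsmul_eq_mul]
    linarith
end
end

section
/- Let S = (s_1,…,s_m) be m i.i.d. samples from μ and let Z = SD⁻(F,S) = sup_{f∈F} { E_μ[f] − (1/m) Σ_{i=1}^m f(s_i) }. Then for every ε > 0, Pr_S( Z ≥ E_S[Z] + ε ) ≤ exp( − m ε² / ( 2 c ( E_S[Z] + γ_F + ε/3 ) ) ). Consequently, for every δ ∈ (0,1), with probability at least 1 − δ over S, Z ≤ E_S[Z] + sqrt( ( c ln(1/δ)/(3m) )² + 2 c ln(1/δ) ( E_S[Z] + γ_F ) / m ) + c ln(1/δ)/(3m). -/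
/-!
The function `g(S) = (m / c) (SD⁻(F, S) + γ_F)` equals
`sup_f (∑ k, (b - f(s_k)) / c + e_f)`, where every summand lies in `[0, 1]` and every offset
`e_f = (m / c) (E f - inf E)` is nonnegative. Removing the `i`-th summand from the sums gives
functions `g_i`, not depending on `s_i`, with `0 ≤ g - g_i ≤ 1` and `∑ i, (g - g_i) ≤ g`:
the function `g` is self-bounding.

Concentration of self-bounding functions follows from the entropy method. By induction on the
number of coordinates (`entropy_le`, whose step is `marginal_entropy_le`), the entropy of
`exp (t g)` is at most `∑ i, E[exp (t g) ψ(t (g - g_i))]` with `ψ x = x - 1 + exp (-x)`. Convexity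
and the self-bounding property turn this into `(1 - exp (-t)) F' ≤ F log F` for the moment
generating function `F` of `g` (`selfBounding_diff_ineq`), which integrates to
`log F(t) ≤ (exp t - 1) E g` (`selfBounding_mgf_le`). Chernoff's bound at `t = s / (E g + s / 3)`
gives the Bernstein tail `exp (-s² / (2 (E g + s / 3)))` (`selfBounding_tail`), and rescaling gives
the first claim. The second claim is the first one at the `ε` for which its right-hand side is `δ`,
the positive root of a quadratic equation.
-/

open MeasureTheory

noncomputable section

/-! ### Bounded measurable functions -/

/-- Bounded measurable real functions: the class in which every integral below is taken. -/
def BddMeas {α : Type*} [MeasurableSpace α] (g : α → ℝ) : Prop :=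
  Measurable g ∧ ∃ K : ℝ, ∀ x, |g x| ≤ K

namespace BddMeas

variable {α β : Type*} [MeasurableSpace α] [MeasurableSpace β] {g h : α → ℝ}

lemma integrable (hg : BddMeas g) (μ : Measure α) [IsFiniteMeasure μ] : Integrable g μ := by
  obtain ⟨hm, K, hK⟩ := hg
  exact Integrable.of_bound hm.aestronglyMeasurable K (.of_forall hK)

lemma const (c : ℝ) : BddMeas (fun _ : α => c) := ⟨measurable_const, |c|, fun _ => le_rfl⟩

lemma add (hg : BddMeas g) (hh : BddMeas h) : BddMeas (fun x => g x + h x) := by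
  obtain ⟨hm, K, hK⟩ := hg
  obtain ⟨hm', K', hK'⟩ := hh
  exact ⟨hm.add hm', K + K', fun x => (abs_add_le _ _).trans (add_le_add (hK x) (hK' x))⟩

lemma mul (hg : BddMeas g) (hh : BddMeas h) : BddMeas (fun x => g x * h x) := by
  obtain ⟨hm, K, hK⟩ := hg
  obtain ⟨hm', K', hK'⟩ := hh
  refine ⟨hm.mul hm', K * K', fun x => ?_⟩
  rw [abs_mul]
  exact mul_le_mul (hK x) (hK' x) (abs_nonneg _) ((abs_nonneg _).trans (hK x))

lemma sub (hg : BddMeas g) (hh : BddMeas h) : BddMeas (fun x => g x - h x) := by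
  simpa [sub_eq_add_neg] using hg.add ((const (-1)).mul hh)

lemma exp (hg : BddMeas g) : BddMeas (fun x => Real.exp (g x)) := by
  obtain ⟨hm, K, hK⟩ := hg
  refine ⟨hm.exp, Real.exp K, fun x => ?_⟩
  rw [abs_of_pos (Real.exp_pos _)]
  exact Real.exp_le_exp.2 ((le_abs_self _).trans (hK x))

lemma comp (hg : BddMeas g) {φ : β → α} (hφ : Measurable φ) : BddMeas (fun x => g (φ x)) := by
  obtain ⟨hm, K, hK⟩ := hg
  exact ⟨hm.comp hφ, K, fun x => hK _⟩

lemma integral_right {H : α × β → ℝ} (hH : BddMeas H) (ν : Measure β) [IsProbabilityMeasure ν] :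
    BddMeas (fun x => ∫ y, H (x, y) ∂ν) := by
  obtain ⟨hm, K, hK⟩ := hH
  refine ⟨hm.stronglyMeasurable.integral_prod_right'.measurable, K, fun x => ?_⟩
  have := norm_integral_le_of_norm_le_const (μ := ν) (f := fun y => H (x, y)) (C := K)
    (.of_forall fun y => hK _)
  simpa using this

lemma integral_exp_pos (hg : BddMeas g) (μ : Measure α) [IsProbabilityMeasure μ] :
    0 < ∫ x, Real.exp (g x) ∂μ :=
  MeasureTheory.integral_exp_pos (hg.exp.integrable μ)

/-- The logarithm of a partial exponential integral is again bounded, because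
`exp (-K) ≤ exp ∘ H ≤ exp K`. -/
lemma log_integral_exp {H : α × β → ℝ} (hH : BddMeas H) (ν : Measure β)
    [IsProbabilityMeasure ν] :
    BddMeas (fun x => Real.log (∫ y, Real.exp (H (x, y)) ∂ν)) := by
  have hm := (hH.exp.integral_right ν).1
  obtain ⟨hmH, K, hK⟩ := hH
  refine ⟨hm.log, K, fun x => ?_⟩
  have hx : BddMeas (fun y => H (x, y)) := comp ⟨hmH, K, hK⟩ measurable_prodMk_left
  have h1 : Real.exp (-K) ≤ ∫ y, Real.exp (H (x, y)) ∂ν := by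
    have := integral_mono (μ := ν) ((const (Real.exp (-K))).integrable ν) (hx.exp.integrable ν)
      (fun y => Real.exp_le_exp.2 (abs_le.1 (hK (x, y))).1)
    simpa using this
  have h2 : ∫ y, Real.exp (H (x, y)) ∂ν ≤ Real.exp K := by
    have := integral_mono (μ := ν) (hx.exp.integrable ν) ((const (Real.exp K)).integrable ν)
      (fun y => Real.exp_le_exp.2 (abs_le.1 (hK (x, y))).2)
    simpa using this
  have hpos := (Real.exp_pos _).trans_le h1
  exact abs_le.2 ⟨(Real.le_log_iff_exp_le hpos).2 h1, (Real.log_le_iff_le_exp hpos).2 h2⟩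

end BddMeas

/-! ### Entropy on product spaces -/

/-- One-coordinate entropy bound: if `H₀` does not depend on the coordinate `x`, the entropy of
the marginal `x ↦ ∫ exp H(x, ·)` is controlled by comparing `exp H` with `exp H₀`. -/
lemma marginal_entropy_le {α β : Type*} [MeasurableSpace α] [MeasurableSpace β]
    (μ : Measure α) [IsProbabilityMeasure μ] (ν : Measure β) [IsProbabilityMeasure ν]
    {H H₀ : α × β → ℝ} (hH : BddMeas H) (hH₀ : BddMeas H₀)
    (hind : ∀ x x' y, H₀ (x, y) = H₀ (x', y)) :
    (∫ x, (∫ y, Real.exp (H (x, y)) ∂ν) * Real.log (∫ y, Real.exp (H (x, y)) ∂ν) ∂μ)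
      - (∫ p, Real.exp (H p) ∂(μ.prod ν)) * Real.log (∫ p, Real.exp (H p) ∂(μ.prod ν))
    ≤ ∫ p, (Real.exp (H p) * (H p - H₀ p) - Real.exp (H p) + Real.exp (H₀ p)) ∂(μ.prod ν) := by
  set M : α → ℝ := fun x => ∫ y, Real.exp (H (x, y)) ∂ν with hM
  set C := ∫ p, Real.exp (H p) ∂(μ.prod ν) with hC
  have hMb : BddMeas M := hH.exp.integral_right ν
  have hLb : BddMeas (fun x => Real.log (M x)) := hH.log_integral_exp ν
  have hMpos : ∀ x, 0 < M x := fun x =>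
    (hH.comp (φ := fun y => (x, y)) measurable_prodMk_left).integral_exp_pos ν
  have hCpos : 0 < C := hH.integral_exp_pos _
  have hMC : ∫ x, M x ∂μ = C := (integral_prod _ (hH.exp.integrable _)).symm
  have hL1 : BddMeas (fun p : α × β => Real.log (M p.1)) := hLb.comp measurable_fst
  have hM1 : BddMeas (fun p : α × β => M p.1) := hMb.comp measurable_fst
  have key : ∀ p : α × β, Real.exp (H p) * (Real.log (M p.1) - Real.log C)
      ≤ (Real.exp (H p) * (H p - H₀ p) - Real.exp (H p))
        + Real.exp (H₀ p) * M p.1 * C⁻¹ := by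
    intro p
    -- `log z ≤ z - 1` at `z = exp (H₀ - H) * M / C`, multiplied by `exp H`
    have h1 := Real.log_le_sub_one_of_pos
      (show 0 < Real.exp (H₀ p - H p) * (M p.1 / C) by
        have := hMpos p.1; positivity)
    rw [Real.log_mul (Real.exp_pos _).ne' (div_pos (hMpos _) hCpos).ne', Real.log_exp,
      Real.log_div (hMpos _).ne' hCpos.ne'] at h1
    have h2 := mul_le_mul_of_nonneg_left h1 (Real.exp_pos (H p)).le
    have h3 : Real.exp (H p) * Real.exp (H₀ p - H p) = Real.exp (H₀ p) := by
      rw [← Real.exp_add]; congr 1; ring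
    have h4 : Real.exp (H p) * (Real.exp (H₀ p - H p) * (M p.1 / C) - 1)
        = Real.exp (H₀ p) * M p.1 * C⁻¹ - Real.exp (H p) := by
      rw [← h3]; ring
    rw [h4] at h2
    linarith
  have hA : BddMeas (fun p => Real.exp (H p) * (H p - H₀ p) - Real.exp (H p)) :=
    (hH.exp.mul (hH.sub hH₀)).sub hH.exp
  have hB : BddMeas (fun p : α × β => Real.exp (H₀ p) * M p.1 * C⁻¹) :=
    (hH₀.exp.mul hM1).mul (.const _)
  have hD : BddMeas (fun p : α × β => Real.exp (H p) * (Real.log (M p.1) - Real.log C)) :=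
    hH.exp.mul (hL1.sub (.const _))
  have hint := integral_mono (μ := μ.prod ν) (hD.integrable _) ((hA.add hB).integrable _) key
  rw [integral_add (hA.integrable _) (hB.integrable _)] at hint
  rw [integral_add (hA.integrable _) (hH₀.exp.integrable _)]
  have e1 : ∫ p : α × β, Real.exp (H p) * (Real.log (M p.1) - Real.log C) ∂(μ.prod ν)
      = (∫ x, M x * Real.log (M x) ∂μ) - C * Real.log C := by
    rw [integral_prod _ (hD.integrable _)]
    simp only [integral_mul_const]
    rw [← hMC, ← integral_mul_const, ← integral_sub ((hMb.mul hLb).integrable _)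
      ((hMb.mul (.const _)).integrable _)]
    simp only [mul_sub, hM]
  have e2 : ∫ p : α × β, Real.exp (H₀ p) * M p.1 * C⁻¹ ∂(μ.prod ν)
      = ∫ p, Real.exp (H₀ p) ∂(μ.prod ν) := by
    obtain ⟨x₀⟩ : Nonempty α := nonempty_of_isProbabilityMeasure μ
    rw [integral_prod _ (hB.integrable _), integral_prod _ (hH₀.exp.integrable _)]
    simp only [integral_mul_const]
    have : ∀ x, ∫ y, Real.exp (H₀ (x, y)) ∂ν = ∫ y, Real.exp (H₀ (x₀, y)) ∂ν := fun x => by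
      simp only [hind x x₀]
    simp only [this, integral_const_mul, hMC]
    simp [hCpos.ne']
  rw [e1, e2] at hint
  exact hint

lemma integral_pi_succ {X : Type*} [MeasurableSpace X] (μ : Measure X) [IsProbabilityMeasure μ]
    {n : ℕ} (F : (Fin (n + 1) → X) → ℝ) :
    ∫ S, F S ∂(Measure.pi fun _ : Fin (n + 1) => μ)
      = ∫ p : X × (Fin n → X), F (Fin.cons p.1 p.2) ∂(μ.prod (Measure.pi fun _ : Fin n => μ)) := by
  rw [← ((measurePreserving_piFinSuccAbove (fun _ : Fin (n + 1) => μ) 0).symm).integral_comp']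
  simp [MeasurableEquiv.piFinSuccAbove_symm_apply, Fin.insertNthEquiv]

lemma measurable_fin_cons {X : Type*} [MeasurableSpace X] {n : ℕ} :
    Measurable (fun p : X × (Fin n → X) => (Fin.cons p.1 p.2 : Fin (n + 1) → X)) := by
  refine measurable_pi_lambda _ fun i => ?_
  refine Fin.cases ?_ (fun j => ?_) i
  · simpa using measurable_fst
  · simp only [Fin.cons_succ]
    fun_prop

/-- Tensorized entropy bound: if each `Gi i` does not depend on coordinate `i`, then
`Ent (exp G) ≤ ∑ i, E[exp G * (G - Gi i) - exp G + exp (Gi i)]`. -/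
lemma entropy_le {X : Type*} [MeasurableSpace X] (μ : Measure X) [IsProbabilityMeasure μ] :
    ∀ (n : ℕ) (G : (Fin n → X) → ℝ) (Gi : Fin n → (Fin n → X) → ℝ),
      BddMeas G → (∀ i, BddMeas (Gi i)) →
      (∀ i S x, Gi i (Function.update S i x) = Gi i S) →
      (∫ S, Real.exp (G S) * G S ∂(Measure.pi fun _ => μ))
        - (∫ S, Real.exp (G S) ∂(Measure.pi fun _ => μ))
          * Real.log (∫ S, Real.exp (G S) ∂(Measure.pi fun _ => μ))
      ≤ ∑ i, ∫ S, (Real.exp (G S) * (G S - Gi i S) - Real.exp (G S) + Real.exp (Gi i S))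
          ∂(Measure.pi fun _ => μ) := by
  intro n
  induction n with
  | zero =>
    intro G Gi _ _ _
    have : ∀ S, G S = G default := fun S => by rw [Subsingleton.elim S default]
    simp [this]
  | succ n ih =>
    intro G Gi hG hGi hind
    set ν := Measure.pi fun _ : Fin n => μ with hν
    let H : X × (Fin n → X) → ℝ := fun p => G (Fin.cons p.1 p.2)
    let Hi : Fin (n + 1) → X × (Fin n → X) → ℝ := fun i p => Gi i (Fin.cons p.1 p.2)
    have hH : BddMeas H := hG.comp measurable_fin_cons
    have hHi : ∀ i, BddMeas (Hi i) := fun i => (hGi i).comp measurable_fin_cons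
    simp only [integral_pi_succ]
    rw [Fin.sum_univ_succ]
    have h0 := marginal_entropy_le μ ν hH (hHi 0) (fun x x' y => by
      have := hind 0 (Fin.cons x' y) x
      rw [Fin.update_cons_zero] at this
      exact this)
    let D : Fin n → X × (Fin n → X) → ℝ := fun i p =>
      Real.exp (H p) * (H p - Hi i.succ p) - Real.exp (H p) + Real.exp (Hi i.succ p)
    have hD : ∀ i, BddMeas (D i) := fun i =>
      ((hH.exp.mul (hH.sub (hHi _))).sub hH.exp).add (hHi _).exp
    have hx : ∀ x, (∫ y, Real.exp (H (x, y)) * H (x, y) ∂ν)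
        - (∫ y, Real.exp (H (x, y)) ∂ν) * Real.log (∫ y, Real.exp (H (x, y)) ∂ν)
        ≤ ∑ i, ∫ y, D i (x, y) ∂ν := fun x =>
      ih (fun y => H (x, y)) (fun i y => Hi i.succ (x, y)) (hH.comp measurable_prodMk_left)
        (fun i => (hHi _).comp measurable_prodMk_left) (fun i S z => by
          have := hind i.succ (Fin.cons x S) z
          rw [← Fin.cons_update] at this
          exact this)
    have hM := hH.exp.integral_right ν
    have hL := hH.log_integral_exp ν
    have hE : BddMeas (fun p => Real.exp (H p) * H p) := hH.exp.mul hH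
    have hint := integral_mono (μ := μ)
      (((hE.integral_right ν).sub (hM.mul hL)).integrable μ)
      (integrable_finsetSum _ fun i _ => ((hD i).integral_right ν).integrable μ) hx
    rw [integral_sub ((hE.integral_right ν).integrable μ) ((hM.mul hL).integrable μ),
      integral_finsetSum _ (fun i _ => ((hD i).integral_right ν).integrable μ),
      ← integral_prod _ (hE.integrable _)] at hint
    simp only [← integral_prod _ ((hD _).integrable (μ.prod ν))] at hint
    simp only [H, Hi, D] at hint h0
    linarith

/-! ### Self-bounding functions -/

/-- The differential inequality `(1 - exp (-t)) F'(t) ≤ F(t) log F(t)` for the moment generating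
function `F` of a self-bounding function. -/
lemma selfBounding_diff_ineq {X : Type*} [MeasurableSpace X] (μ : Measure X)
    [IsProbabilityMeasure μ] {n : ℕ} {g : (Fin n → X) → ℝ} {gi : Fin n → (Fin n → X) → ℝ}
    (hg : BddMeas g) (hgi : ∀ i, BddMeas (gi i))
    (hind : ∀ i S x, gi i (Function.update S i x) = gi i S)
    (h0 : ∀ i S, 0 ≤ g S - gi i S) (h1 : ∀ i S, g S - gi i S ≤ 1)
    (hs : ∀ S, ∑ i, (g S - gi i S) ≤ g S) (t : ℝ) :
    (1 - Real.exp (-t)) * ∫ S, g S * Real.exp (t * g S) ∂(Measure.pi fun _ => μ)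
      ≤ (∫ S, Real.exp (t * g S) ∂(Measure.pi fun _ => μ))
          * Real.log (∫ S, Real.exp (t * g S) ∂(Measure.pi fun _ => μ)) := by
  set P := Measure.pi fun _ : Fin n => μ with hP
  have hG : BddMeas (fun S => t * g S) := (BddMeas.const t).mul hg
  have hGi : ∀ i, BddMeas (fun S => t * gi i S) := fun i => (BddMeas.const t).mul (hgi i)
  have hent := entropy_le μ n (fun S => t * g S) (fun i S => t * gi i S) hG hGi
    (fun i S x => by rw [hind])
  have hψ : 0 ≤ t - 1 + Real.exp (-t) := by linarith [Real.add_one_le_exp (-t)]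
  have hterm : ∀ i S, Real.exp (t * g S) * (t * g S - t * gi i S) - Real.exp (t * g S)
      + Real.exp (t * gi i S)
      ≤ (t - 1 + Real.exp (-t)) * (Real.exp (t * g S) * (g S - gi i S)) := by
    intro i S
    set d := g S - gi i S with hd
    -- convexity of `exp` between the points `0` and `-t`
    have hconv := convexOn_exp.2 (Set.mem_univ (0 : ℝ)) (Set.mem_univ (-t))
      (sub_nonneg.2 (h1 i S)) (h0 i S) (by ring)
    simp only [smul_eq_mul, mul_zero, zero_add, Real.exp_zero, mul_one, ← hd] at hconv
    have e : Real.exp (t * gi i S) = Real.exp (t * g S) * Real.exp (d * -t) := by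
      rw [← Real.exp_add]; congr 1; rw [hd]; ring
    have h2 := mul_le_mul_of_nonneg_left hconv (Real.exp_pos (t * g S)).le
    rw [e, ← mul_sub, ← hd]
    linarith
  have hT : ∀ i, BddMeas (fun S => Real.exp (t * g S) * (t * g S - t * gi i S)
      - Real.exp (t * g S) + Real.exp (t * gi i S)) := fun i =>
    ((hG.exp.mul (hG.sub (hGi i))).sub hG.exp).add (hGi i).exp
  have hge : BddMeas (fun S => g S * Real.exp (t * g S)) := hg.mul hG.exp
  have hsum : ∑ i, ∫ S, (Real.exp (t * g S) * (t * g S - t * gi i S)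
      - Real.exp (t * g S) + Real.exp (t * gi i S)) ∂P
      ≤ (t - 1 + Real.exp (-t)) * ∫ S, g S * Real.exp (t * g S) ∂P := by
    rw [← integral_finsetSum _ (fun i _ => (hT i).integrable P), ← integral_const_mul]
    refine integral_mono (integrable_finsetSum _ fun i _ => (hT i).integrable P)
      ((hge.integrable P).const_mul _) fun S => ?_
    refine (Finset.sum_le_sum fun i _ => hterm i S).trans ?_
    rw [← Finset.mul_sum, ← Finset.mul_sum, mul_comm (g S)]
    have := hs S
    gcongr
  have e : ∫ S, Real.exp (t * g S) * (t * g S) ∂P = t * ∫ S, g S * Real.exp (t * g S) ∂P := by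
    rw [← integral_const_mul]
    congr 1; ext S; ring
  rw [e] at hent
  linarith

/-- Poisson-type bound on the moment generating function of a self-bounding function: the
differential inequality says that `log F(t) / (exp t - 1)` is nonincreasing on `t > 0`, and its
limit at `0` is the mean. -/
lemma selfBounding_mgf_le {X : Type*} [MeasurableSpace X] (μ : Measure X)
    [IsProbabilityMeasure μ] {n : ℕ} {g : (Fin n → X) → ℝ} {gi : Fin n → (Fin n → X) → ℝ}
    (hg : BddMeas g) (hgi : ∀ i, BddMeas (gi i))
    (hind : ∀ i S x, gi i (Function.update S i x) = gi i S)
    (h0 : ∀ i S, 0 ≤ g S - gi i S) (h1 : ∀ i S, g S - gi i S ≤ 1)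
    (hs : ∀ S, ∑ i, (g S - gi i S) ≤ g S) {t : ℝ} (ht : 0 < t) :
    ProbabilityTheory.mgf g (Measure.pi fun _ => μ) t
      ≤ Real.exp ((Real.exp t - 1) * ∫ S, g S ∂(Measure.pi fun _ => μ)) := by
  set P := Measure.pi fun _ : Fin n => μ with hP
  have hexp : ∀ t : ℝ, Integrable (fun S => Real.exp (t * g S)) P := fun t =>
    ((BddMeas.const t).mul hg).exp.integrable P
  have huniv : ProbabilityTheory.integrableExpSet g P = Set.univ :=
    Set.eq_univ_of_forall hexp
  have hmem : ∀ t : ℝ, t ∈ interior (ProbabilityTheory.integrableExpSet g P) := fun t => by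
    simp [huniv]
  set L := ProbabilityTheory.cgf g P with hL
  have hpos : ∀ t, 0 < ProbabilityTheory.mgf g P t := fun t =>
    ProbabilityTheory.mgf_pos (hexp t)
  have hder : ∀ t, HasDerivAt L (deriv L t) t := fun t =>
    (ProbabilityTheory.analyticAt_cgf (hmem t)).differentiableAt.hasDerivAt
  have hode : ∀ t, (1 - Real.exp (-t)) * deriv L t ≤ L t := by
    intro t
    have := selfBounding_diff_ineq μ hg hgi hind h0 h1 hs t
    rw [hL, ProbabilityTheory.deriv_cgf (hmem t), ← mul_div_assoc, div_le_iff₀ (hpos t)]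
    simp only [ProbabilityTheory.cgf]
    rw [mul_comm (Real.log _)]
    exact this
  have hne : ∀ s : ℝ, 0 < s → 0 < Real.exp s - 1 := fun s hs => by
    linarith [Real.add_one_lt_exp hs.ne']
  have hR : ∀ s : ℝ, 0 < s → HasDerivAt (fun s => L s / (Real.exp s - 1))
      ((deriv L s * (Real.exp s - 1) - L s * Real.exp s) / (Real.exp s - 1) ^ 2) s :=
    fun s hs => (hder s).div ((Real.hasDerivAt_exp s).sub_const 1) (hne s hs).ne'
  have hanti : AntitoneOn (fun s => L s / (Real.exp s - 1)) (Set.Ioi 0) := by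
    refine antitoneOn_of_deriv_nonpos (convex_Ioi 0)
      (fun s hs => (hR s hs).continuousAt.continuousWithinAt)
      (fun s hs => (hR s (by simpa using hs)).differentiableAt.differentiableWithinAt) ?_
    intro s hs
    rw [interior_Ioi] at hs
    rw [(hR s hs).deriv]
    refine div_nonpos_of_nonpos_of_nonneg ?_ (sq_nonneg _)
    have h2 := mul_le_mul_of_nonneg_left (hode s) (Real.exp_pos s).le
    have h3 : Real.exp s * Real.exp (-s) = 1 := by rw [← Real.exp_add]; simp
    have h4 : Real.exp s * ((1 - Real.exp (-s)) * deriv L s)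
        = deriv L s * (Real.exp s - Real.exp s * Real.exp (-s)) := by ring
    rw [h4, h3] at h2
    linarith
  have hlim : Filter.Tendsto (fun s => L s / (Real.exp s - 1)) (nhdsWithin 0 (Set.Ioi 0))
      (nhds (∫ S, g S ∂P)) := by
    have hL0 : HasDerivAt L (∫ S, g S ∂P) 0 := by
      have := hder 0
      rw [hL, ProbabilityTheory.deriv_cgf_zero (hmem 0)] at this
      simpa using this
    have hE0 : HasDerivAt Real.exp 1 0 := by simpa using Real.hasDerivAt_exp 0
    have := (hL0.tendsto_slope_zero.div hE0.tendsto_slope_zero one_ne_zero).mono_left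
      (nhdsWithin_mono 0 (fun s (hs : 0 < s) => (hs.ne' : s ≠ 0)))
    rw [div_one] at this
    refine this.congr' ?_
    filter_upwards [self_mem_nhdsWithin] with s hs
    have hs' : s ≠ 0 := ne_of_gt hs
    have : L 0 = 0 := by simp [hL]
    simp only [Pi.div_apply, zero_add, this, sub_zero, Real.exp_zero, smul_eq_mul]
    rw [mul_div_mul_left _ _ (inv_ne_zero hs')]
  have hle : L t / (Real.exp t - 1) ≤ ∫ S, g S ∂P := by
    refine ge_of_tendsto hlim ?_
    filter_upwards [Ioo_mem_nhdsGT ht] with s hs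
    exact hanti hs.1 ht hs.2.le
  rw [div_le_iff₀ (hne t ht), mul_comm] at hle
  rw [← Real.exp_log (hpos t)]
  exact Real.exp_le_exp.2 hle

/-- Division-free form of Bernstein's bound `exp x - 1 - x ≤ x² / (2 (1 - x / 3))`. -/
lemma exp_bernstein {x : ℝ} (hx : 0 ≤ x) :
    (1 - x / 3) * (Real.exp x - 1 - x) ≤ x ^ 2 / 2 := by
  let D : ℝ → ℝ := fun x => x ^ 2 / 2 - (1 - x / 3) * (Real.exp x - 1 - x)
  let D' : ℝ → ℝ := fun x => x + (Real.exp x - 1 - x) / 3 - (1 - x / 3) * (Real.exp x - 1)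
  have hlin : ∀ x : ℝ, HasDerivAt (fun x : ℝ => 1 - x / 3) (-(1 / 3)) x := fun x => by
    simpa using ((hasDerivAt_id x).div_const 3).const_sub 1
  have hD : ∀ x, HasDerivAt D (D' x) x := fun x => by
    have h := ((hasDerivAt_pow 2 x).div_const 2).sub ((hlin x).mul
      (((Real.hasDerivAt_exp x).sub_const 1).sub (hasDerivAt_id x)))
    refine h.congr_deriv ?_
    simp only [D', Pi.sub_apply, id]
    push_cast
    ring
  have hD' : ∀ x, HasDerivAt D' ((1 + (x - 1) * Real.exp x) / 3) x := fun x => by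
    have h := ((hasDerivAt_id x).add
      ((((Real.hasDerivAt_exp x).sub_const 1).sub (hasDerivAt_id x)).div_const 3)).sub
      ((hlin x).mul ((Real.hasDerivAt_exp x).sub_const 1))
    refine h.congr_deriv ?_
    ring
  have hD'mono : Monotone D' := monotone_of_deriv_nonneg
    (fun x => (hD' x).differentiableAt) fun x => by
      rw [(hD' x).deriv]
      have h1 := mul_le_mul_of_nonneg_right (Real.add_one_le_exp (-x)) (Real.exp_pos x).le
      rw [← Real.exp_add, neg_add_cancel, Real.exp_zero] at h1
      linarith
  have hDmono : MonotoneOn D (Set.Ici 0) := monotoneOn_of_deriv_nonneg (convex_Ici 0)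
    (fun x _ => (hD x).continuousAt.continuousWithinAt)
    (fun x _ => (hD x).differentiableAt.differentiableWithinAt) fun x hx => by
      rw [(hD x).deriv]
      rw [interior_Ici] at hx
      have := hD'mono (le_of_lt hx)
      simpa [D'] using this
  have := hDmono Set.self_mem_Ici hx hx
  simp only [D, Real.exp_zero] at this
  linarith

/-- Bernstein-type tail bound for self-bounding functions. -/
lemma selfBounding_tail {X : Type*} [MeasurableSpace X] (μ : Measure X)
    [IsProbabilityMeasure μ] {n : ℕ} {g : (Fin n → X) → ℝ} {gi : Fin n → (Fin n → X) → ℝ}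
    (hg : BddMeas g) (hgi : ∀ i, BddMeas (gi i))
    (hind : ∀ i S x, gi i (Function.update S i x) = gi i S)
    (h0 : ∀ i S, 0 ≤ g S - gi i S) (h1 : ∀ i S, g S - gi i S ≤ 1)
    (hs : ∀ S, ∑ i, (g S - gi i S) ≤ g S) {v : ℝ}
    (hv : v = ∫ S, g S ∂(Measure.pi fun _ => μ)) (hv0 : 0 < v) {t : ℝ} (ht : 0 < t) :
    (Measure.pi fun _ : Fin n => μ).real {S | v + t ≤ g S}
      ≤ Real.exp (-t ^ 2 / (2 * (v + t / 3))) := by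
  -- the Chernoff parameter, a near-optimal choice making the exponent rational
  set l := t / (v + t / 3) with hl
  have hden : 0 < v + t / 3 := by positivity
  have hl0 : 0 < l := by positivity
  have hch := ProbabilityTheory.measure_ge_le_exp_mul_mgf (μ := Measure.pi fun _ : Fin n => μ)
    (X := g) (v + t) hl0.le (((BddMeas.const l).mul hg).exp.integrable _)
  have hmgf := selfBounding_mgf_le μ hg hgi hind h0 h1 hs hl0
  rw [← hv] at hmgf
  refine hch.trans ((mul_le_mul_of_nonneg_left hmgf (Real.exp_pos _).le).trans ?_)
  rw [← Real.exp_add]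
  refine Real.exp_le_exp.2 ?_
  have hb := exp_bernstein hl0.le
  have e1 : 1 - l / 3 = v / (v + t / 3) := by
    rw [hl]; field_simp; ring
  have hb2 : v * (Real.exp l - 1 - l) ≤ l ^ 2 / 2 * (v + t / 3) := by
    rw [e1, div_mul_eq_mul_div, div_le_iff₀ hden] at hb
    exact hb
  have e2 : l * (v + t / 3) = t := by rw [hl]; field_simp
  have e3 : -t ^ 2 / (2 * (v + t / 3)) = - (l * t) / 2 := by rw [hl]; field_simp
  rw [e3]
  have e4 : l ^ 2 / 2 * (v + t / 3) = l * t / 2 := by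
    linear_combination (l / 2) * e2
  rw [e4] at hb2
  linarith

/-! ### Suprema of sums -/

/-- The supremum `⨆ l, (∑ k ∈ J, u l (S k) + e l)`. With `J` the full index set this is the
function to be concentrated; erasing `i` from `J` gives a version blind to coordinate `i`. -/
def supSum {X ι : Type*} {m : ℕ} (u : ι → X → ℝ) (e : ι → ℝ) (J : Finset (Fin m))
    (S : Fin m → X) : ℝ :=
  ⨆ l : ι, (∑ k ∈ J, u l (S k) + e l)

section supSum

variable {X ι : Type*} {m : ℕ} {u : ι → X → ℝ} {e : ι → ℝ} {B : ℝ}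

lemma supSum_bddAbove (hu1 : ∀ l x, u l x ≤ 1) (heB : ∀ l, e l ≤ B) (J : Finset (Fin m))
    (S : Fin m → X) : BddAbove (Set.range fun l : ι => ∑ k ∈ J, u l (S k) + e l) := by
  refine ⟨J.card + B, ?_⟩
  rintro _ ⟨l, rfl⟩
  refine add_le_add ?_ (heB l)
  simpa using Finset.sum_le_card_nsmul J (fun k => u l (S k)) 1 (fun k _ => hu1 l _)

lemma supSum_bddMeas [MeasurableSpace X] [Countable ι] [Nonempty ι]
    (hum : ∀ l, Measurable (u l)) (hu0 : ∀ l x, 0 ≤ u l x) (hu1 : ∀ l x, u l x ≤ 1)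
    (he0 : ∀ l, 0 ≤ e l) (heB : ∀ l, e l ≤ B) (J : Finset (Fin m)) :
    BddMeas (supSum u e J) := by
  refine ⟨Measurable.iSup fun l => ?_, J.card + B, fun S => ?_⟩
  · exact (Finset.measurable_sum _ fun k _ => (hum l).comp (measurable_pi_apply k)).add_const _
  · rw [abs_of_nonneg]
    · refine ciSup_le fun l => add_le_add ?_ (heB l)
      simpa using Finset.sum_le_card_nsmul J (fun k => u l (S k)) 1 (fun k _ => hu1 l _)
    · exact Real.iSup_nonneg fun l => add_nonneg (Finset.sum_nonneg fun k _ => hu0 l _) (he0 l)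

lemma supSum_erase_update (i : Fin m) (S : Fin m → X) (x : X) :
    supSum u e (Finset.univ.erase i) (Function.update S i x)
      = supSum u e (Finset.univ.erase i) S := by
  unfold supSum
  congr 1; ext l
  congr 1
  refine Finset.sum_congr rfl fun k hk => ?_
  rw [Function.update_of_ne (Finset.ne_of_mem_erase hk)]

lemma supSum_erase_le [Nonempty ι] (hu0 : ∀ l x, 0 ≤ u l x) (hu1 : ∀ l x, u l x ≤ 1)
    (heB : ∀ l, e l ≤ B) (i : Fin m) (S : Fin m → X) :
    0 ≤ supSum u e Finset.univ S - supSum u e (Finset.univ.erase i) S := by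
  refine sub_nonneg.2 (ciSup_mono (supSum_bddAbove hu1 heB _ S) fun l => ?_)
  have := Finset.sum_erase_add Finset.univ (fun k => u l (S k)) (Finset.mem_univ i)
  have := hu0 l (S i)
  linarith

lemma supSum_sub_erase_le_one [Nonempty ι] (hu1 : ∀ l x, u l x ≤ 1)
    (heB : ∀ l, e l ≤ B) (i : Fin m) (S : Fin m → X) :
    supSum u e Finset.univ S - supSum u e (Finset.univ.erase i) S ≤ 1 := by
  refine sub_le_iff_le_add.2 (ciSup_le fun l => ?_)
  have h1 := Finset.sum_erase_add Finset.univ (fun k => u l (S k)) (Finset.mem_univ i)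
  have h2 := hu1 l (S i)
  have h3 : ∑ k ∈ Finset.univ.erase i, u l (S k) + e l ≤ supSum u e (Finset.univ.erase i) S :=
    le_ciSup (supSum_bddAbove hu1 heB (Finset.univ.erase i) S) l
  linarith

/-- The self-bounding property: at a near-maximizer `l`, erasing coordinate `i` loses at most
about `u l (S i)`, and these losses sum to at most the supremum because `e l ≥ 0`. -/
lemma supSum_selfBounding [Nonempty ι] (hu1 : ∀ l x, u l x ≤ 1)
    (he0 : ∀ l, 0 ≤ e l) (heB : ∀ l, e l ≤ B) (S : Fin m → X) :
    ∑ i, (supSum u e Finset.univ S - supSum u e (Finset.univ.erase i) S)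
      ≤ supSum u e Finset.univ S := by
  refine le_of_forall_pos_le_add fun η hη => ?_
  have hη' : 0 < η / (m + 1) := by positivity
  obtain ⟨l, hl⟩ := exists_lt_of_lt_ciSup
    (show supSum u e Finset.univ S - η / (m + 1) < ⨆ l : ι, (∑ k, u l (S k) + e l) from
      sub_lt_self _ hη')
  have hterm : ∀ i, supSum u e Finset.univ S - supSum u e (Finset.univ.erase i) S
      ≤ u l (S i) + η / (m + 1) := fun i => by
    have h1 := Finset.sum_erase_add Finset.univ (fun k => u l (S k)) (Finset.mem_univ i)
    have h3 : ∑ k ∈ Finset.univ.erase i, u l (S k) + e l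
        ≤ supSum u e (Finset.univ.erase i) S :=
      le_ciSup (supSum_bddAbove hu1 heB (Finset.univ.erase i) S) l
    linarith
  refine (Finset.sum_le_sum fun i _ => hterm i).trans ?_
  rw [Finset.sum_add_distrib]
  have h4 : ∑ k, u l (S k) + e l ≤ supSum u e Finset.univ S :=
    le_ciSup (supSum_bddAbove hu1 heB Finset.univ S) l
  have h5 : ∑ _i : Fin m, η / ((m : ℝ) + 1) ≤ η := by
    rw [Finset.sum_const, Finset.card_univ, Fintype.card_fin, nsmul_eq_mul, mul_div_assoc',
      div_le_iff₀ (by positivity)]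
    nlinarith
  have := he0 l
  linarith

end supSum

/-! ### The concentration inequality -/

theorem stmt_16 {X : Type*} [MeasurableSpace X] {ι : Type*} [Countable ι]
    (f : ι → X → ℝ) (a b : ℝ) (ha : a ≤ 0) (hb : 0 < b)
    (hmeas : ∀ l : ι, Measurable (f l))
    (hrange : ∀ (l : ι) (x : X), f l x ∈ Set.Icc a b)
    (hzero : ∃ l₀ : ι, ∀ x : X, f l₀ x = 0)
    (μ : Measure X) [IsProbabilityMeasure μ] (m : ℕ) (hm : 0 < m)
    (EZ : ℝ) (hEZ : EZ = ∫ S : Fin m → X, sdMinus f μ S ∂(Measure.pi fun _ : Fin m => μ)) :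
    (∀ ε : ℝ, 0 < ε →
      ((Measure.pi fun _ : Fin m => μ)
          {S : Fin m → X | sdMinus f μ S ≥ EZ + ε}).toReal ≤
        Real.exp (-((m : ℝ) * ε ^ 2) / (2 * (b - a) * (EZ + gammaF f μ b + ε / 3)))) ∧
    ∀ δ : ℝ, δ ∈ Set.Ioo (0 : ℝ) 1 →
      1 - δ ≤ ((Measure.pi fun _ : Fin m => μ)
        {S : Fin m → X | sdMinus f μ S ≤ EZ +
          Real.sqrt (((b - a) * Real.log (1 / δ) / (3 * m)) ^ 2 +
            2 * (b - a) * Real.log (1 / δ) * (EZ + gammaF f μ b) / m) +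
          (b - a) * Real.log (1 / δ) / (3 * m)}).toReal := by
  have hc : 0 < b - a := by linarith
  have hm' : (0 : ℝ) < m := by exact_mod_cast hm
  obtain ⟨l₀, hl₀⟩ := hzero
  have : Nonempty ι := ⟨l₀⟩
  have hfb : ∀ l, BddMeas (f l) := fun l =>
    ⟨hmeas l, max |a| |b|, fun x => abs_le_max_abs_abs (hrange l x).1 (hrange l x).2⟩
  have hIa : ∀ l, a ≤ ∫ x, f l x ∂μ := fun l => by
    simpa using integral_mono (μ := μ) ((BddMeas.const a).integrable μ) ((hfb l).integrable μ)
      (fun x => (hrange l x).1)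
  have hIb : ∀ l, ∫ x, f l x ∂μ ≤ b := fun l => by
    simpa using integral_mono (μ := μ) ((hfb l).integrable μ) ((BddMeas.const b).integrable μ)
      (fun x => (hrange l x).2)
  set I : ℝ := ⨅ l : ι, ∫ x, f l x ∂μ with hI
  have hIbdd : BddBelow (Set.range fun l : ι => ∫ x, f l x ∂μ) :=
    ⟨a, by rintro _ ⟨l, rfl⟩; exact hIa l⟩
  have hIle : ∀ l, I ≤ ∫ x, f l x ∂μ := fun l => ciInf_le hIbdd l
  have hI0 : I ≤ 0 := by simpa [hl₀] using hIle l₀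
  have hγ : gammaF f μ b = b - I := rfl
  -- normalized summands in `[0, 1]`, and the nonnegative deterministic offsets
  let u : ι → X → ℝ := fun l x => (b - f l x) / (b - a)
  let e : ι → ℝ := fun l => m / (b - a) * ((∫ x, f l x ∂μ) - I)
  have hum : ∀ l, Measurable (u l) := fun l => ((hmeas l).const_sub b).div_const _
  have hu0 : ∀ l x, 0 ≤ u l x := fun l x =>
    div_nonneg (sub_nonneg.2 (hrange l x).2) hc.le
  have hu1 : ∀ l x, u l x ≤ 1 := fun l x => by
    rw [div_le_one hc]; linarith [(hrange l x).1]
  have he0 : ∀ l, 0 ≤ e l := fun l =>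
    mul_nonneg (by positivity) (sub_nonneg.2 (hIle l))
  have heB : ∀ l, e l ≤ m / (b - a) * (b - I) := fun l =>
    mul_le_mul_of_nonneg_left (by linarith [hIb l]) (by positivity)
  have hg : ∀ S : Fin m → X, supSum u e Finset.univ S
      = m / (b - a) * (sdMinus f μ S + gammaF f μ b) := by
    intro S
    have hZ : BddAbove (Set.range fun l : ι =>
        (∫ x, f l x ∂μ) - (m : ℝ)⁻¹ * ∑ k : Fin m, f l (S k)) := by
      refine ⟨b - a, ?_⟩
      rintro _ ⟨l, rfl⟩
      have h1 : (m : ℝ) * a ≤ ∑ k : Fin m, f l (S k) := by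
        simpa using Finset.card_nsmul_le_sum Finset.univ (fun k => f l (S k)) a
          (fun k _ => (hrange l _).1)
      have h2 : a ≤ (m : ℝ)⁻¹ * ∑ k : Fin m, f l (S k) := by
        rw [inv_mul_eq_div, le_div_iff₀ hm']; linarith
      simp only
      linarith [hIb l]
    unfold sdMinus supSum
    rw [ciSup_add hZ, Real.mul_iSup_of_nonneg (by positivity)]
    congr 1; ext l
    simp only [u, e, hγ]
    rw [← Finset.sum_div, Finset.sum_sub_distrib]
    simp only [Finset.sum_const, Finset.card_univ, Fintype.card_fin, nsmul_eq_mul]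
    field_simp
    ring
  have hgb : BddMeas (supSum (m := m) u e Finset.univ) :=
    supSum_bddMeas hum hu0 hu1 he0 heB _
  have hZg : ∀ S : Fin m → X, sdMinus f μ S
      = (b - a) / m * supSum u e Finset.univ S - gammaF f μ b := fun S => by
    rw [hg]; field_simp; ring
  have hZb : BddMeas (fun S : Fin m → X => sdMinus f μ S) := by
    simp only [hZg]
    exact ((BddMeas.const _).mul hgb).sub (.const _)
  have hEZ0 : 0 ≤ EZ := by
    rw [hEZ]
    refine integral_nonneg fun S => ?_
    have h1 : ∑ k, u l₀ (S k) + e l₀ ≤ supSum u e Finset.univ S :=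
      le_ciSup (supSum_bddAbove hu1 heB Finset.univ S) l₀
    have h2 : ∑ k : Fin m, u l₀ (S k) + e l₀ = m / (b - a) * (b - I) := by
      simp only [u, e, hl₀]
      simp
      ring
    rw [h2, hg, hγ] at h1
    have := le_of_mul_le_mul_left h1 (by positivity)
    simp only [Pi.zero_apply]
    linarith
  have hw : 0 < EZ + gammaF f μ b := by rw [hγ]; linarith
  have hmean : m / (b - a) * (EZ + gammaF f μ b)
      = ∫ S, supSum u e Finset.univ S ∂(Measure.pi fun _ : Fin m => μ) := by
    simp only [hg]
    rw [integral_const_mul, integral_add (hZb.integrable _) (integrable_const _), ← hEZ]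
    simp
  have hpart : ∀ ε : ℝ, 0 < ε →
      ((Measure.pi fun _ : Fin m => μ)
          {S : Fin m → X | sdMinus f μ S ≥ EZ + ε}).toReal ≤
        Real.exp (-((m : ℝ) * ε ^ 2) / (2 * (b - a) * (EZ + gammaF f μ b + ε / 3))) := by
    intro ε hε
    have htail := selfBounding_tail μ hgb
      (fun i => supSum_bddMeas hum hu0 hu1 he0 heB (Finset.univ.erase i))
      (fun i S x => supSum_erase_update i S x)
      (fun i S => supSum_erase_le hu0 hu1 heB i S)
      (fun i S => supSum_sub_erase_le_one hu1 heB i S)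
      (fun S => supSum_selfBounding hu1 he0 heB S) hmean (by positivity)
      (t := m / (b - a) * ε) (by positivity)
    have hset : {S : Fin m → X | sdMinus f μ S ≥ EZ + ε}
        = {S | m / (b - a) * (EZ + gammaF f μ b) + m / (b - a) * ε
            ≤ supSum u e Finset.univ S} := by
      ext S
      simp only [Set.mem_ofPred_eq, ge_iff_le]
      rw [hg, ← mul_add, mul_le_mul_iff_right₀ (by positivity)]
      constructor <;> intro h <;> linarith
    rw [hset]
    refine htail.trans (le_of_eq ?_)
    congr 1
    field_simp
  refine ⟨hpart, ?_⟩
  rintro δ ⟨hδ0, hδ1⟩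
  set w := EZ + gammaF f μ b with hwdef
  have hLpos : 0 < Real.log (1 / δ) := Real.log_pos (by rw [lt_div_iff₀ hδ0]; linarith)
  set L := Real.log (1 / δ) with hL
  set r := (b - a) * L / (3 * m) with hr
  have hr0 : 0 < r := by positivity
  set q := Real.sqrt (r ^ 2 + 2 * (b - a) * L * w / m) with hq
  have hqsq : q ^ 2 = r ^ 2 + 2 * (b - a) * L * w / m := Real.sq_sqrt (by positivity)
  have hq0 : 0 ≤ q := Real.sqrt_nonneg _
  have hbound := hpart (q + r) (by positivity)
  -- `q + r` is the positive root of `m ε² = 2 c L (w + ε / 3)`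
  have hroot : (m : ℝ) * (q + r) ^ 2 = L * (2 * (b - a) * (w + (q + r) / 3)) := by
    have h1 : (m : ℝ) * q ^ 2 = m * r ^ 2 + 2 * (b - a) * L * w := by
      rw [hqsq]; field_simp
    have h2 : 3 * m * r = (b - a) * L := by rw [hr]; field_simp
    linear_combination h1 + (2 / 3) * (q + r) * h2
  have hexp : Real.exp (-((m : ℝ) * (q + r) ^ 2) / (2 * (b - a) * (w + (q + r) / 3))) = δ := by
    rw [hroot, ← neg_mul, mul_div_assoc, div_self (by positivity), mul_one, hL, one_div,
      Real.log_inv, neg_neg, Real.exp_log hδ0]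
  rw [hexp] at hbound
  have hmeasSet : MeasurableSet {S : Fin m → X | sdMinus f μ S ≥ EZ + (q + r)} :=
    measurableSet_le measurable_const hZb.1
  have hcompl := probReal_compl_eq_one_sub (μ := Measure.pi fun _ : Fin m => μ) hmeasSet
  calc 1 - δ ≤ (Measure.pi fun _ : Fin m => μ).real
        {S : Fin m → X | sdMinus f μ S ≥ EZ + (q + r)}ᶜ := by
        rw [hcompl]; exact sub_le_sub_left hbound 1
    _ ≤ _ := by
        refine measureReal_mono (fun S hS => ?_)
        simp only [Set.mem_compl_iff, Set.mem_ofPred_eq, ge_iff_le, not_le] at hS ⊢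
        linarith
end
end

section
/- Let S = (s_1,…,s_m) be m i.i.d. samples from μ. For all 0 < ε ≤ η_F, Pr_S( η_F ≥ η̂_F(S) + ε ) ≤ exp( − ( m η_F / c ) · h( − ε / η_F ) ) ≤ exp( − m ε² / ( 2 c η_F ) ), where h(x) = (1+x)ln(1+x) − x. Furthermore, for every δ ∈ (0,1), with probability at least 1 − δ over S, η_F ≤ η̂_F(S) + c ln(1/δ)/m + sqrt( ( c ln(1/δ)/m )² + 2 c η̂_F(S) ln(1/δ)/m ). -/
/-!
For every member `f l` of the class, `η̂ ≥ (1/m) Σ f l (s_i) - a`, so the event `η ≥ η̂ + ε`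
lies inside the lower-tail event of each single empirical mean. The rescaled variables
`(f l (s_i) - a) / (b - a)` are i.i.d. in `[0,1]`, and Chernoff's method with the Poisson bound
`E[y ^ Z] ≤ exp (E[Z] (y - 1))` controls that tail (`chernoff_single`). The bound is monotone
and continuous in the mean, so it survives the supremum over `l` (`chernoff_sup`), and the choice
`y = 1 - ε / η` gives the bound with `h` (`tail_bound`). The sub-Gaussian form follows from
`h (-x) ≥ x² / 2` on `[0,1]`.

For the confidence bound, write `K = (b - a) ln (1/δ) / m` and take `ε = √(2 K η)`, which makes the
second tail bound equal to `δ`. Off the bad event `(η - η̂)² ≤ 2 K η` or `η ≤ η̂`, and solving the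
quadratic gives the claim. If `ε > η`, the claim holds for every sample.
-/


open MeasureTheory

noncomputable section

open ProbabilityTheory in
/-- Lower-tail Chernoff bound for i.i.d. samples of a single `[0,1]`-valued function, with the
Poisson bound on the moment generating function; `y ∈ (0,1]` is the exponential of the
Chernoff parameter. -/
lemma chernoff_single {X : Type*} [MeasurableSpace X] (μ : Measure X) [IsProbabilityMeasure μ]
    (g : X → ℝ) (hg : Measurable g) (hr : ∀ x, g x ∈ Set.Icc (0 : ℝ) 1) (m : ℕ)
    (y : ℝ) (hy0 : 0 < y) (hy1 : y ≤ 1) (r : ℝ) :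
    (Measure.pi fun _ : Fin m => μ).real {S : Fin m → X | ∑ k, g (S k) ≤ r} ≤
      Real.exp (m * (∫ x, g x ∂μ) * (y - 1) - Real.log y * r) := by
  have hlog : Real.log y ≤ 0 := Real.log_nonpos hy0.le hy1
  have hgi : Integrable g μ :=
    Integrable.of_bound hg.aestronglyMeasurable 1 (Filter.Eventually.of_forall fun x => by
      rw [Real.norm_eq_abs, abs_le]; exact ⟨by linarith [(hr x).1], (hr x).2⟩)
  have hei : Integrable (fun x => Real.exp (Real.log y * g x)) μ :=
    Integrable.of_bound (by fun_prop) 1 (Filter.Eventually.of_forall fun x => by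
      rw [Real.norm_eq_abs, abs_of_pos (Real.exp_pos _), Real.exp_le_one_iff]
      exact mul_nonpos_of_nonpos_of_nonneg hlog (hr x).1)
  -- convexity of the exponential on the segment from `0` to `log y`
  have hpt : ∀ x, Real.exp (Real.log y * g x) ≤ 1 + (y - 1) * g x := fun x => by
    have h := convexOn_exp.2 (Set.mem_univ 0) (Set.mem_univ (Real.log y))
      (by linarith [(hr x).2] : 0 ≤ 1 - g x) (hr x).1 (by ring)
    simp only [smul_eq_mul, mul_zero, zero_add, Real.exp_zero, Real.exp_log hy0] at h
    rw [mul_comm]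
    linarith
  have hI : ∫ x, Real.exp (Real.log y * g x) ∂μ ≤ Real.exp ((∫ x, g x ∂μ) * (y - 1)) := by
    calc _ ≤ ∫ x, (1 + (y - 1) * g x) ∂μ :=
          integral_mono hei ((integrable_const _).add (hgi.const_mul _)) hpt
      _ = 1 + (y - 1) * ∫ x, g x ∂μ := by
          rw [integral_add (integrable_const _) (hgi.const_mul _), integral_const_mul]; simp
      _ ≤ _ := by
          have := Real.add_one_le_exp ((∫ x, g x ∂μ) * (y - 1)); linarith
  have hprod : ∀ S : Fin m → X, Real.exp (Real.log y * ∑ k, g (S k)) =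
      ∏ k, Real.exp (Real.log y * g (S k)) := fun S => by
    rw [Finset.mul_sum, Real.exp_sum]
  have hint : Integrable (fun S : Fin m → X => Real.exp (Real.log y * ∑ k, g (S k)))
      (Measure.pi fun _ : Fin m => μ) := by
    simp only [hprod]
    exact Integrable.fintype_prod (f := fun _ x => Real.exp (Real.log y * g x)) fun _ => hei
  refine (measure_le_le_exp_mul_mgf (X := fun S : Fin m → X => ∑ k, g (S k)) r hlog hint).trans ?_
  have hmgf : mgf (fun S : Fin m → X => ∑ k, g (S k)) (Measure.pi fun _ : Fin m => μ)
      (Real.log y) = (∫ x, Real.exp (Real.log y * g x) ∂μ) ^ m := by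
    simp only [mgf, hprod]
    rw [integral_fintype_prod_eq_prod (fun _ x => Real.exp (Real.log y * g x))]
    simp
  rw [hmgf]
  calc _ ≤ Real.exp (-Real.log y * r) * Real.exp ((∫ x, g x ∂μ) * (y - 1)) ^ m := by
        gcongr
    _ = _ := by
        rw [← Real.exp_nat_mul, ← Real.exp_add]; congr 1; ring

/-- The substitution `1 - x = exp (-s)` turns this inequality into `s ≤ sinh s`. -/
lemma sq_div_two_le_hfun_neg (x : ℝ) (hx0 : 0 ≤ x) (hx1 : x ≤ 1) : x ^ 2 / 2 ≤ hfun (-x) := by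
  unfold hfun
  rcases hx1.eq_or_lt with rfl | hx
  · norm_num
  have hu : 0 < 1 + -x := by linarith
  have h := Real.self_le_sinh_iff.2
    (neg_nonneg.2 (Real.log_nonpos hu.le (by linarith : 1 + -x ≤ 1)))
  rw [Real.sinh_eq, neg_neg, Real.exp_neg, Real.exp_log hu] at h
  have h2 := mul_le_mul_of_nonneg_left h hu.le
  have h3 : (1 + -x) * (((1 + -x)⁻¹ - (1 + -x)) / 2) = (1 - (1 + -x) ^ 2) / 2 := by
    field_simp
  nlinarith

section
variable {X ι : Type*} (f : ι → X → ℝ) (a b : ℝ)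
  (hrange : ∀ (l : ι) (x : X), f l x ∈ Set.Icc a b) (m : ℕ)

include hrange in
lemma mean_le (hm : 0 < m) (l : ι) (S : Fin m → X) :
    (m : ℝ)⁻¹ * ∑ k : Fin m, f l (S k) ≤ b := by
  have h : ∑ k : Fin m, f l (S k) ≤ m * b := by
    simpa using Finset.sum_le_sum fun k (_ : k ∈ Finset.univ) => (hrange l (S k)).2
  rw [inv_mul_le_iff₀ (by exact_mod_cast hm)]
  exact h

include hrange in
lemma mean_le_etahat (hm : 0 < m) (l : ι) (S : Fin m → X) :
    (m : ℝ)⁻¹ * ∑ k : Fin m, f l (S k) - a ≤ etahat f S a := by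
  unfold etahat
  have := le_ciSup (f := fun l => (m : ℝ)⁻¹ * ∑ k : Fin m, f l (S k))
    ⟨b, by rintro _ ⟨l, rfl⟩; exact mean_le f a b hrange m hm l S⟩ l
  linarith

include hrange in
lemma etahat_nonneg [Nonempty ι] (hm : 0 < m) (S : Fin m → X) : 0 ≤ etahat f S a := by
  obtain ⟨l⟩ := ‹Nonempty ι›
  refine le_trans ?_ (mean_le_etahat f a b hrange m hm l S)
  have hm' : (0 : ℝ) < m := by exact_mod_cast hm
  have h : m * a ≤ ∑ k : Fin m, f l (S k) := by
    simpa using Finset.sum_le_sum fun k (_ : k ∈ Finset.univ) => (hrange l (S k)).1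
  rw [sub_nonneg, le_inv_mul_iff₀ hm']
  exact h

variable [MeasurableSpace X] (hmeas : ∀ l : ι, Measurable (f l))
  (μ : Measure X) [IsProbabilityMeasure μ]

include hmeas hrange in
/-- The single-function bound holds for every member of the class with the same event, so it
passes to the supremum of the means. -/
lemma chernoff_sup [Nonempty ι] (hab : a < b) (hm : 0 < m) (y : ℝ) (hy0 : 0 < y) (hy1 : y < 1)
    (ε : ℝ) :
    (Measure.pi fun _ : Fin m => μ).real {S : Fin m → X | etaF f μ a ≥ etahat f S a + ε} ≤
      Real.exp (m * (etaF f μ a / (b - a)) * (y - 1) -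
        Real.log y * (m * (etaF f μ a - ε) / (b - a))) := by
  have hc : 0 < b - a := by linarith
  have hm' : (0 : ℝ) < m := by exact_mod_cast hm
  set r := m * (etaF f μ a - ε) / (b - a) with hr
  set P := (Measure.pi fun _ : Fin m => μ).real
    {S : Fin m → X | etaF f μ a ≥ etahat f S a + ε} with hP
  have key : ∀ l, P ≤
      Real.exp (m * (((∫ x, f l x ∂μ) - a) / (b - a)) * (y - 1) - Real.log y * r) := fun l => by
    have hfi : Integrable (f l) μ :=
      Integrable.of_mem_Icc a b (hmeas l).aemeasurable (Filter.Eventually.of_forall (hrange l))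
    have h := chernoff_single μ (fun x => (f l x - a) / (b - a))
      (((hmeas l).sub_const a).div_const _)
      (fun x => ⟨div_nonneg (by linarith [(hrange l x).1]) hc.le,
        (div_le_one hc).2 (by linarith [(hrange l x).2])⟩) m y hy0 hy1.le r
    rw [integral_div, integral_sub hfi (integrable_const _)] at h
    simp only [integral_const, probReal_univ, one_smul] at h
    refine (measureReal_mono (fun S hS => ?_)).trans h
    have h1 := mean_le_etahat f a b hrange m hm l S
    simp only [Set.mem_ofPred_eq] at hS ⊢
    rw [hr, ← Finset.sum_div, div_le_div_iff_of_pos_right hc, Finset.sum_sub_distrib]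
    simp only [Finset.sum_const, Finset.card_univ, Fintype.card_fin, nsmul_eq_mul]
    have h2 : (m : ℝ)⁻¹ * ∑ k : Fin m, f l (S k) ≤ etaF f μ a - ε + a := by linarith
    rw [inv_mul_le_iff₀ hm'] at h2
    linarith
  have hP0 : 0 ≤ P := measureReal_nonneg
  rcases hP0.eq_or_lt with h0 | h0
  · rw [← h0]; positivity
  rw [← Real.log_le_iff_le_exp h0]
  -- solve for the mean, the coefficient `A` being negative, in order to take the supremum
  set A := m * (y - 1) / (b - a) with hA
  have hAneg : A < 0 := div_neg_of_neg_of_pos (mul_neg_of_pos_of_neg hm' (by linarith)) hc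
  have hs : (⨆ l, ∫ x, f l x ∂μ) ≤ (Real.log P + Real.log y * r) / A + a := by
    refine ciSup_le fun l => ?_
    have h := (Real.log_le_iff_le_exp h0).2 (key l)
    rw [← sub_le_iff_le_add, le_div_iff_of_neg hAneg]
    have : ((∫ x, f l x ∂μ) - a) * A =
      m * (((∫ x, f l x ∂μ) - a) / (b - a)) * (y - 1) := by rw [hA]; ring
    linarith
  rw [← sub_le_iff_le_add, le_div_iff_of_neg hAneg] at hs
  have : ((⨆ l, ∫ x, f l x ∂μ) - a) * A = m * (etaF f μ a / (b - a)) * (y - 1) := by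
    rw [hA, etaF]; ring
  linarith

include hmeas hrange in
lemma tail_bound [Nonempty ι] (hab : a < b) (hm : 0 < m) (ε : ℝ) (hε : 0 < ε)
    (hεη : ε ≤ etaF f μ a) :
    (Measure.pi fun _ : Fin m => μ).real {S : Fin m → X | etaF f μ a ≥ etahat f S a + ε} ≤
      Real.exp (-((m : ℝ) * etaF f μ a / (b - a)) * hfun (-ε / etaF f μ a)) := by
  have hη : 0 < etaF f μ a := hε.trans_le hεη
  have hc : 0 < b - a := by linarith
  have key := fun y h0 h1 => chernoff_sup f a b hrange m hmeas μ hab hm y h0 h1 ε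
  set η := etaF f μ a
  rcases hεη.eq_or_lt with h | h
  · -- the optimal `y` is `0`, reached only in the limit
    rw [← h] at key ⊢
    simp only [sub_self, mul_zero, zero_div, sub_zero] at key
    have hlim : Filter.Tendsto (fun y : ℝ => Real.exp (m * (ε / (b - a)) * (y - 1)))
        (nhdsWithin 0 (Set.Ioi 0)) (nhds (Real.exp (m * (ε / (b - a)) * (0 - 1)))) :=
      (Continuous.tendsto (by fun_prop) 0).mono_left nhdsWithin_le_nhds
    have h1 : -(m * ε / (b - a)) * hfun (-ε / ε) = m * (ε / (b - a)) * (0 - 1) := by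
      rw [neg_div, div_self hε.ne', hfun]; norm_num; ring
    rw [h1]
    refine ge_of_tendsto hlim ?_
    filter_upwards [Ioo_mem_nhdsGT (zero_lt_one' ℝ)] with y hy using key y hy.1 hy.2
  · have hy0 : 0 < 1 + -ε / η := by
      have : ε / η < 1 := (div_lt_one hη).2 h
      rw [neg_div]; linarith
    have hy1 : 1 + -ε / η < 1 := by
      have : 0 < ε / η := by positivity
      rw [neg_div]; linarith
    refine (key _ hy0 hy1).trans (le_of_eq ?_)
    congr 1
    rw [hfun]
    generalize Real.log (1 + -ε / η) = L
    field_simp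
    ring

end

/-- Solving the quadratic inequality `(η - e)² ≤ 2Kη` for `η`. -/
lemma le_of_sq_le {η e K : ℝ} (h : (η - e) ^ 2 ≤ 2 * K * η) :
    η ≤ e + K + Real.sqrt (K ^ 2 + 2 * K * e) := by
  have : η - e - K ≤ Real.sqrt (K ^ 2 + 2 * K * e) := Real.le_sqrt_of_sq_le (by nlinarith)
  linarith

theorem stmt_17 {X : Type*} [MeasurableSpace X] {ι : Type*} [Countable ι]
    (f : ι → X → ℝ) (a b : ℝ) (ha : a ≤ 0) (hb : 0 < b)
    (hmeas : ∀ l : ι, Measurable (f l))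
    (hrange : ∀ (l : ι) (x : X), f l x ∈ Set.Icc a b)
    (hzero : ∃ l₀ : ι, ∀ x : X, f l₀ x = 0)
    (μ : Measure X) [IsProbabilityMeasure μ] (m : ℕ) (hm : 0 < m) :
    (∀ ε : ℝ, 0 < ε → ε ≤ etaF f μ a →
      ((Measure.pi fun _ : Fin m => μ)
          {S : Fin m → X | etaF f μ a ≥ etahat f S a + ε}).toReal ≤
        Real.exp (-((m : ℝ) * etaF f μ a / (b - a)) * hfun (-ε / etaF f μ a)) ∧
      Real.exp (-((m : ℝ) * etaF f μ a / (b - a)) * hfun (-ε / etaF f μ a)) ≤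
        Real.exp (-((m : ℝ) * ε ^ 2) / (2 * (b - a) * etaF f μ a))) ∧
    ∀ δ : ℝ, δ ∈ Set.Ioo (0 : ℝ) 1 →
      1 - δ ≤ ((Measure.pi fun _ : Fin m => μ)
        {S : Fin m → X | etaF f μ a ≤ etahat f S a + (b - a) * Real.log (1 / δ) / m +
          Real.sqrt (((b - a) * Real.log (1 / δ) / m) ^ 2 +
            2 * (b - a) * etahat f S a * Real.log (1 / δ) / m)}).toReal := by
  have hab : a < b := by linarith
  have hc : 0 < b - a := by linarith
  have hm' : (0 : ℝ) < m := by exact_mod_cast hm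
  obtain ⟨l₀, hl₀⟩ := hzero
  have : Nonempty ι := ⟨l₀⟩
  have h2 : ∀ ε : ℝ, 0 < ε → ε ≤ etaF f μ a →
      Real.exp (-((m : ℝ) * etaF f μ a / (b - a)) * hfun (-ε / etaF f μ a)) ≤
        Real.exp (-((m : ℝ) * ε ^ 2) / (2 * (b - a) * etaF f μ a)) := by
    intro ε hε hεη
    have hη : 0 < etaF f μ a := hε.trans_le hεη
    have h := sq_div_two_le_hfun_neg (ε / etaF f μ a) (by positivity) ((div_le_one hη).2 hεη)
    rw [Real.exp_le_exp, neg_div _ ε]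
    have h3 := mul_le_mul_of_nonneg_left h
      (by positivity : 0 ≤ (m : ℝ) * etaF f μ a / (b - a))
    have h4 : (m : ℝ) * etaF f μ a / (b - a) * ((ε / etaF f μ a) ^ 2 / 2) =
        ((m : ℝ) * ε ^ 2) / (2 * (b - a) * etaF f μ a) := by field_simp
    rw [neg_div, neg_mul]
    linarith
  refine ⟨fun ε hε hεη => ⟨tail_bound f a b hrange m hmeas μ hab hm ε hε hεη, h2 ε hε hεη⟩, ?_⟩
  rintro δ ⟨hδ0, hδ1⟩
  have hL : 0 < Real.log (1 / δ) := Real.log_pos ((one_lt_div hδ0).2 hδ1)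
  set L := Real.log (1 / δ) with hLdef
  set K := (b - a) * L / m with hK
  have hK0 : 0 < K := by positivity
  set η := etaF f μ a with hηdef
  set G := {S : Fin m → X | η ≤ etahat f S a + K +
    Real.sqrt (K ^ 2 + 2 * (b - a) * etahat f S a * L / m)} with hG
  have hGmem : ∀ S : Fin m → X, (η - etahat f S a) ^ 2 ≤ 2 * K * η → S ∈ G := fun S hS => by
    have := le_of_sq_le hS
    rw [hG, Set.mem_ofPred_eq,
      show 2 * (b - a) * etahat f S a * L / m = 2 * K * etahat f S a by rw [hK]; ring]
    exact this
  have hpos := etahat_nonneg f a b hrange m hm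
  -- samples with `η ≤ η̂` always belong to the event
  have hGle : ∀ S : Fin m → X, η ≤ etahat f S a → S ∈ G := fun S hS => by
    rw [hG, Set.mem_ofPred_eq]
    linarith [Real.sqrt_nonneg (K ^ 2 + 2 * (b - a) * etahat f S a * L / m)]
  change 1 - δ ≤ (Measure.pi fun _ : Fin m => μ).real G
  by_cases hcase : η ≤ 2 * K
  · -- here `(η - η̂)² ≤ η² ≤ 2Kη` whenever `η̂ ≤ η`
    have hall : G = Set.univ := Set.eq_univ_of_forall fun S => by
      rcases le_total η (etahat f S a) with h | h
      · exact hGle S h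
      · exact hGmem S (by nlinarith [hpos S])
    rw [hall, probReal_univ]
    linarith
  · push Not at hcase
    have hη : 0 < η := by linarith
    set ε := Real.sqrt (2 * K * η) with hε
    have hεsq : ε ^ 2 = 2 * K * η := Real.sq_sqrt (by positivity)
    have hε0 : 0 < ε := Real.sqrt_pos.2 (by positivity)
    have hεη : ε ≤ η := Real.sqrt_le_iff.2 ⟨hη.le, by nlinarith⟩
    have hB := (tail_bound f a b hrange m hmeas μ hab hm ε hε0 hεη).trans (h2 ε hε0 hεη)
    have hexp : Real.exp (-((m : ℝ) * ε ^ 2) / (2 * (b - a) * η)) = δ := by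
      have : -((m : ℝ) * ε ^ 2) / (2 * (b - a) * η) = Real.log δ := by
        rw [hεsq, hK, hLdef, one_div, Real.log_inv]; field_simp
      rw [this, Real.exp_log hδ0]
    rw [hexp] at hB
    have hcover : (Set.univ : Set (Fin m → X)) ⊆ G ∪ {S | η ≥ etahat f S a + ε} := fun S _ => by
      by_cases hS : η ≥ etahat f S a + ε
      · exact Or.inr hS
      · left
        rcases le_total η (etahat f S a) with h | h
        · exact hGle S h
        · exact hGmem S (by push Not at hS; rw [← hεsq]; nlinarith)
    have h3 := (measureReal_mono (μ := Measure.pi fun _ : Fin m => μ) hcover).trans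
      (measureReal_union_le _ _)
    rw [probReal_univ] at h3
    linarith
end
end
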